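/- arXiv:1404.2873 — 2 statements merged into one kernel-verified Lean document; each statement's English description precedes it below -/
import Mathlib

section
/- Let G be a finite abelian group and G₀ ⊆ G a subset with |G₀| ≥ r(G) + 2 satisfying: (a) for every h ∈ G₀, the set G₀ \ {h} is half-factorial and h ∉ ⟨G₀ \ {h, h'}⟩ for every h' ∈ G₀ \ {h}; and (b) there exists g ∈ G₀ with g ∈ ⟨G₀ \ {g}⟩ such that ord(g) is not a prime power. Then |G₀| ≤ exp(G) − 2. -/
open Multiset

section Defs

variable {G : Type*} [AddCommGroup G]

/-- `S` is a zero-sum sequence over `G₀`: a multiset with entries in `G₀` and sum `0`. -/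
def IsZeroSumSeq (G₀ : Set G) (S : Multiset G) : Prop :=
  (∀ x ∈ S, x ∈ G₀) ∧ S.sum = 0

/-- `S` is an atom over `G₀`: a nonempty zero-sum sequence over `G₀` that is not the
union of two nonempty zero-sum sequences over `G₀`. -/
def IsAtomSeq (G₀ : Set G) (S : Multiset G) : Prop :=
  IsZeroSumSeq G₀ S ∧ S ≠ 0 ∧
    ∀ A B : Multiset G, IsZeroSumSeq G₀ A → IsZeroSumSeq G₀ B →
      A ≠ 0 → B ≠ 0 → S ≠ A + B

/-- The set of lengths of `B`: all `k` such that `B` is a union of `k` atoms over `G₀`. -/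
def LengthSet (G₀ : Set G) (B : Multiset G) : Set ℕ :=
  {k | ∃ l : Multiset (Multiset G), Multiset.card l = k ∧
      (∀ A ∈ l, IsAtomSeq G₀ A) ∧ l.sum = B}

/-- The set of successive distances of a set of naturals. -/
def DeltaOf (L : Set ℕ) : Set ℕ :=
  {d | ∃ x ∈ L, ∃ y ∈ L, x < y ∧ y - x = d ∧ ∀ z ∈ L, ¬(x < z ∧ z < y)}

/-- The set of distances `Δ(G₀)`. -/
def DeltaSet (G₀ : Set G) : Set ℕ :=
  {d | ∃ B : Multiset G, IsZeroSumSeq G₀ B ∧ B ≠ 0 ∧ d ∈ DeltaOf (LengthSet G₀ B)}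

/-- `G₀` is half-factorial if `Δ(G₀) = ∅`. -/
def IsHalfFactorialSet (G₀ : Set G) : Prop := DeltaSet G₀ = ∅

/-- `G₀` is minimal non-half-factorial if `Δ(G₀) ≠ ∅` and every proper subset is
half-factorial. -/
def IsMinNonHalfFactorial (G₀ : Set G) : Prop :=
  (DeltaSet G₀).Nonempty ∧ ∀ G₁ : Set G, G₁ ⊂ G₀ → DeltaSet G₁ = ∅

/-- The cross number `k(S) = Σ 1/ord(g)` of a multiset over `G`. -/
noncomputable def crossNumber (S : Multiset G) : ℚ :=
  (S.map (fun g => ((addOrderOf g : ℚ))⁻¹)).sum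

/-- `G₀` is an LCN-set if every atom over `G₀` has cross number at least 1. -/
def IsLCNSet (G₀ : Set G) : Prop :=
  ∀ U : Multiset G, IsAtomSeq G₀ U → 1 ≤ crossNumber U

/-- A subset of `G \ {0}` is independent if any integral linear relation on its elements
has all summands zero. -/
def IsIndependentSet (E : Set G) : Prop :=
  (0 : G) ∉ E ∧ ∀ s : Finset G, ↑s ⊆ E → ∀ f : G → ℤ,
    (∑ e ∈ s, f e • e) = 0 → ∀ e ∈ s, f e • e = 0

/-- `d` is a greatest common divisor of the set `S` of naturals. -/
def IsSetGcd (S : Set ℕ) (d : ℕ) : Prop :=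
  (∀ s ∈ S, d ∣ s) ∧ ∀ e : ℕ, (∀ s ∈ S, e ∣ s) → e ∣ d

end Defs

/-- The set of minimal distances `Δ*(G)`. -/
def DeltaStar (G : Type*) [AddCommGroup G] : Set ℕ :=
  {d | ∃ G₀ : Set G, (DeltaSet G₀).Nonempty ∧ d = sInf (DeltaSet G₀)}

/-- The `p`-rank of a finite abelian group: `log_p` of the order of the `p`-torsion
subgroup `{x | p • x = 0}`. -/
noncomputable def pRank (G : Type*) [AddCommGroup G] (p : ℕ) : ℕ :=
  Nat.log p (Nat.card {x : G // p • x = 0})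

/-- The rank of a finite abelian group: the maximum of the `p`-ranks over all primes. -/
noncomputable def rankG (G : Type*) [AddCommGroup G] : ℕ :=
  sSup {r : ℕ | ∃ p : ℕ, p.Prime ∧ r = pRank G p}

/-!
Write `E = G₀ \ {g}`. By (a), `g` lies in `⟨E⟩` but not in `⟨F⟩` for any proper subset `F` of `E`.
Let `b` be the order of `g` modulo `⟨F⟩`. An irredundant way of writing `-b g` as a sum over `F`
gives an atom `g ^ b T`, in which every element of `T` occurs at least twice, again by (a). Over a
half-factorial set, every atom `A` has length at most `exp G = n`, because `A ^ n` is a product of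
at least `|A|` atoms of the form `e ^ ord e`. Hence `b + 2 |supp T| ≤ n`, and `g` has the same
order modulo `⟨supp T⟩` as modulo `⟨F⟩`.

Choose a proper subset `F₁` of `E` for which the order `d` of `g` modulo `⟨F₁⟩` is minimal, and
let `p` be a prime divisor of `d`. Burnside's basis theorem gives `F₂ ⊆ E` with at most `r(G)`
elements such that the order `c` of `g` modulo `⟨F₂⟩` is prime to `p`. Replacing `F₁` and `F₂` by
the supports obtained above, the order of `g` modulo `⟨F₁ ∪ F₂⟩` divides `gcd(d, c) < d`, so
`F₁ ∪ F₂ = E`. As `c ≠ d` are both at least `2`, the two bounds add up to `2 |E| + 5 ≤ 2 n`.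
-/

/-! ### Lengths of factorizations in half-factorial sets -/

theorem subsingleton_of_deltaOf_eq_empty {L : Set ℕ} (hL : DeltaOf L = ∅) : L.Subsingleton := by
  have hnlt : ∀ x ∈ L, ∀ y ∈ L, ¬x < y := by
    intro x hx y hy hxy
    have hne : (L ∩ Set.Ioi x).Nonempty := ⟨y, hy, hxy⟩
    obtain ⟨hz, hxz⟩ := Nat.sInf_mem hne
    have hmem : sInf (L ∩ Set.Ioi x) - x ∈ DeltaOf L :=
      ⟨x, hx, _, hz, hxz, rfl, fun _ hw h => (Nat.sInf_le (And.intro hw h.1)).not_gt h.2⟩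
    exact Set.eq_empty_iff_forall_notMem.1 hL _ hmem
  exact fun x hx y hy => le_antisymm (not_lt.1 (hnlt y hy x hx)) (not_lt.1 (hnlt x hx y hy))

section Factorization

variable {G : Type*} [AddCommGroup G] {H : Set G}

theorem IsHalfFactorialSet.subsingleton_lengthSet (hH : IsHalfFactorialSet H) {B : Multiset G}
    (hB : IsZeroSumSeq H B) (hB0 : B ≠ 0) : (LengthSet H B).Subsingleton :=
  subsingleton_of_deltaOf_eq_empty <| Set.eq_empty_of_forall_notMem fun d hd =>
    Set.eq_empty_iff_forall_notMem.1 hH d ⟨B, hB, hB0, hd⟩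

theorem add_mem_lengthSet {B C : Multiset G} {k m : ℕ} (hk : k ∈ LengthSet H B)
    (hm : m ∈ LengthSet H C) : k + m ∈ LengthSet H (B + C) := by
  obtain ⟨l, rfl, hl, rfl⟩ := hk
  obtain ⟨l', rfl, hl', rfl⟩ := hm
  exact ⟨l + l', card_add l l', fun A hA => (mem_add.1 hA).elim (hl A) (hl' A), sum_add l l'⟩

theorem IsAtomSeq.mem_lengthSet_nsmul {A : Multiset G} (hA : IsAtomSeq H A) (k : ℕ) :
    k ∈ LengthSet H (k • A) :=
  ⟨replicate k A, card_replicate k A, fun _ hU => eq_of_mem_replicate hU ▸ hA, sum_replicate k A⟩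

theorem isAtomSeq_replicate_addOrderOf {e : G} (he : e ∈ H) (hfin : IsOfFinAddOrder e) :
    IsAtomSeq H (replicate (addOrderOf e) e) := by
  have hpos : 0 < addOrderOf e := hfin.addOrderOf_pos
  refine ⟨⟨fun x hx => eq_of_mem_replicate hx ▸ he, ?_⟩, ?_, ?_⟩
  · rw [sum_replicate, addOrderOf_nsmul_eq_zero]
  · rw [← card_pos, card_replicate]
    exact hpos
  · intro A B hA _ hA0 hB0 hAB
    obtain ⟨k, -, rfl⟩ := le_replicate_iff.1 (hAB ▸ le_add_right A B)
    have hk : 0 < k := by simpa using card_pos.2 hA0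
    have hord : addOrderOf e ≤ k :=
      addOrderOf_le_of_nsmul_eq_zero hk (by rw [← sum_replicate, hA.2])
    have hcard : addOrderOf e = k + card B := by simpa using congrArg card hAB
    have := card_pos.2 hB0
    omega

theorem exists_mem_lengthSet_nsmul_card_le {n : ℕ} (hn : 0 < n) (hH : ∀ x ∈ H, n • x = 0)
    (S : Multiset G) (hS : ∀ x ∈ S, x ∈ H) : ∃ k ∈ LengthSet H (n • S), card S ≤ k := by
  induction S using Multiset.induction_on with
  | empty => exact ⟨0, ⟨0, by simp⟩, le_rfl⟩
  | cons a S ih =>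
    obtain ⟨k, hk, hSk⟩ := ih fun x hx => hS x (mem_cons_of_mem hx)
    have haH : a ∈ H := hS a (mem_cons_self a S)
    obtain ⟨m, rfl⟩ := addOrderOf_dvd_of_nsmul_eq_zero (hH a haH)
    have hatom : IsAtomSeq H (replicate (addOrderOf a) a) :=
      isAtomSeq_replicate_addOrderOf haH (addOrderOf_pos_iff.1 (pos_of_mul_pos_left hn m.zero_le))
    have hsplit : (addOrderOf a * m) • (a ::ₘ S)
        = m • replicate (addOrderOf a) a + (addOrderOf a * m) • S := by
      rw [← singleton_add, nsmul_add, nsmul_singleton, nsmul_replicate, mul_comm]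
    refine ⟨m + k, hsplit ▸ add_mem_lengthSet (hatom.mem_lengthSet_nsmul m) hk, ?_⟩
    have hm : 0 < m := pos_of_mul_pos_right hn (Nat.zero_le _)
    rw [card_cons]
    omega

theorem IsAtomSeq.card_le_of_isHalfFactorialSet {A : Multiset G} (hA : IsAtomSeq H A)
    (hHF : IsHalfFactorialSet H) {n : ℕ} (hn : 0 < n) (hH : ∀ x ∈ H, n • x = 0) : card A ≤ n := by
  obtain ⟨k, hk, hAk⟩ := exists_mem_lengthSet_nsmul_card_le hn hH A hA.1.1
  have hzero : IsZeroSumSeq H (n • A) :=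
    ⟨fun x hx => hA.1.1 x (mem_of_mem_nsmul hx), by rw [sum_nsmul, hA.1.2, smul_zero]⟩
  have hne : n • A ≠ 0 := smul_ne_zero hn.ne' hA.2.1
  exact hAk.trans_eq (hHF.subsingleton_lengthSet hzero hne hk (hA.mem_lengthSet_nsmul n))

end Factorization

/-! ### Orders modulo a generated subgroup -/

section OrderMod

variable {G : Type*} [AddCommGroup G]

/-- The order of `g` modulo the subgroup `⟨F⟩`, that is, the least `n > 0` with `n • g ∈ ⟨F⟩`, or
`0` if there is none. -/
noncomputable def orderMod (F : Set G) (g : G) : ℕ :=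
  addOrderOf (g : G ⧸ AddSubgroup.closure F)

variable {E F : Set G} {g : G}

theorem orderMod_dvd_iff {n : ℕ} : orderMod F g ∣ n ↔ n • g ∈ AddSubgroup.closure F := by
  rw [orderMod, addOrderOf_dvd_iff_nsmul_eq_zero, ← QuotientAddGroup.mk_nsmul,
    QuotientAddGroup.eq_zero_iff]

theorem orderMod_nsmul_mem (F : Set G) (g : G) : orderMod F g • g ∈ AddSubgroup.closure F :=
  orderMod_dvd_iff.1 dvd_rfl

theorem orderMod_eq_one_iff : orderMod F g = 1 ↔ g ∈ AddSubgroup.closure F := by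
  rw [← Nat.dvd_one, orderMod_dvd_iff, one_smul]

theorem orderMod_dvd_of_subset (h : F ⊆ E) : orderMod E g ∣ orderMod F g :=
  orderMod_dvd_iff.2 (AddSubgroup.closure_mono h (orderMod_nsmul_mem F g))

theorem orderMod_pos (F : Set G) (hg : IsOfFinAddOrder g) : 0 < orderMod F g :=
  ((QuotientAddGroup.mk' (AddSubgroup.closure F)).isOfFinAddOrder hg).addOrderOf_pos

end OrderMod

/-! ### Zero-sum free sequences -/

section ZeroSumFree

variable {G : Type*} [AddCommGroup G] {F H : Set G} {g : G}

/-- `T` is a zero-sum free sequence: no nonempty subsequence of `T` has sum `0`. -/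
def IsZeroSumFree (T : Multiset G) : Prop :=
  ∀ A ≤ T, A.sum = 0 → A = 0

theorem multiset_sum_mem_closure {T : Multiset G} (hT : ∀ x ∈ T, x ∈ F) :
    T.sum ∈ AddSubgroup.closure F :=
  multiset_sum_mem T fun x hx => AddSubgroup.subset_closure (hT x hx)

theorem exists_isZeroSumFree_sum_eq (hF : ∀ x ∈ F, IsOfFinAddOrder x) {s : G}
    (hs : s ∈ AddSubgroup.closure F) :
    ∃ T : Multiset G, (∀ x ∈ T, x ∈ F) ∧ T.sum = s ∧ IsZeroSumFree T := by
  rw [← AddSubgroup.mem_toAddSubmonoid, AddSubgroup.closure_toAddSubmonoid_of_isOfFinAddOrder hF]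
    at hs
  obtain ⟨T₀, hT₀⟩ := AddSubmonoid.exists_multiset_of_mem_closure hs
  obtain ⟨T, -, ⟨hTF, hTs⟩, hmin⟩ :=
    exists_minimal_le_of_wellFoundedLT (fun T : Multiset G => (∀ x ∈ T, x ∈ F) ∧ T.sum = s) T₀ hT₀
  refine ⟨T, hTF, hTs, fun A hAT hA => ?_⟩
  obtain ⟨B, rfl⟩ := Multiset.le_iff_exists_add.1 hAT
  have hB : A + B ≤ B :=
    hmin ⟨fun x hx => hTF x (mem_add.2 (.inr hx)), by rwa [sum_add, hA, zero_add] at hTs⟩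
      (le_add_left B A)
  exact card_eq_zero.1 (by simpa using card_le_card hB)

theorem IsZeroSumFree.isAtomSeq_replicate_orderMod_add {T : Multiset G} (hfree : IsZeroSumFree T)
    (hTF : ∀ x ∈ T, x ∈ F) (hT : T.sum = -(orderMod F g • g)) (hg : IsOfFinAddOrder g)
    (hgH : g ∈ H) (hFH : F ⊆ H) : IsAtomSeq H (replicate (orderMod F g) g + T) := by
  classical
  set b := orderMod F g
  have hb : 0 < b := orderMod_pos F hg
  refine ⟨⟨fun x hx => ?_, ?_⟩, ?_, ?_⟩
  · exact (mem_add.1 hx).elim (fun h => eq_of_mem_replicate h ▸ hgH) fun h => hFH (hTF x h)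
  · rw [sum_add, sum_replicate, hT, add_neg_cancel]
  · rw [← card_pos, card_add, card_replicate]
    omega
  intro A B hA hB hA0 hB0 hAB
  -- Write `A = g ^ i U` with `U ≤ T`. Then `b ∣ i`, so `A` (if `i = 0`) or `B` (if `i = b`) is
  -- contained in `T`.
  obtain ⟨i, hib, hi⟩ : ∃ i ≤ b, A - T = replicate i g :=
    le_replicate_iff.1 (tsub_le_iff_right.2 (hAB ▸ le_add_right A B))
  have hAi : replicate i g + A ∩ T = A := hi ▸ sub_add_inter A T
  have hbi : b ∣ i := by
    have hsum : i • g + (A ∩ T).sum = 0 := by rw [← sum_replicate, ← sum_add, hAi, hA.2]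
    rw [orderMod_dvd_iff, eq_neg_of_add_eq_zero_left hsum]
    exact neg_mem (multiset_sum_mem_closure fun x hx => hTF x (mem_of_le inter_le_right hx))
  obtain rfl | hi0 := i.eq_zero_or_pos
  · rw [replicate_zero, zero_add] at hAi
    exact hA0 (hfree A (hAi ▸ inter_le_right) hA.2)
  · obtain rfl : i = b := le_antisymm hib (Nat.le_of_dvd hi0 hbi)
    rw [← hAi, add_assoc, add_right_inj] at hAB
    exact hB0 (hfree B (hAB ▸ le_add_left B _) hB.2)

theorem IsZeroSumSeq.two_le_count [DecidableEq G] {M : Multiset G} (hM : IsZeroSumSeq H M) {f : G}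
    (hfM : f ∈ M) (hf : f ∉ AddSubgroup.closure (H \ {f})) : 2 ≤ count f M := by
  by_contra! hlt
  have hnot : f ∉ M.erase f := by
    rw [← count_eq_zero, count_erase_self]
    omega
  have hsum : f + (M.erase f).sum = 0 := by rw [sum_erase hfM, hM.2]
  have hmem : (M.erase f).sum ∈ AddSubgroup.closure (H \ {f}) :=
    multiset_sum_mem_closure fun x hx =>
      ⟨hM.1 x (mem_of_mem_erase hx), fun hxf => hnot (Set.mem_singleton_iff.1 hxf ▸ hx)⟩
  exact hf ((add_mem_cancel_right hmem).1 (hsum ▸ zero_mem _))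

theorem exists_subset_two_mul_ncard_add_orderMod_le (hHF : IsHalfFactorialSet H) {n : ℕ}
    (hn : 0 < n) (hH : ∀ x ∈ H, n • x = 0) (hg : g ∈ H) (hF : F ⊆ H \ {g})
    (hind : ∀ f ∈ F, f ∉ AddSubgroup.closure (H \ {f})) :
    ∃ F' ⊆ F, orderMod F' g = orderMod F g ∧ 2 * F'.ncard + orderMod F g ≤ n := by
  classical
  have hfin : ∀ x ∈ H, IsOfFinAddOrder x := fun x hx =>
    isOfFinAddOrder_iff_nsmul_eq_zero.2 ⟨n, hn, hH x hx⟩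
  have hFH : F ⊆ H := hF.trans Set.sdiff_subset
  obtain ⟨T, hTF, hT, hfree⟩ := exists_isZeroSumFree_sum_eq (fun x hx => hfin x (hFH hx))
    (neg_mem (orderMod_nsmul_mem F g))
  have hatom : IsAtomSeq H (replicate (orderMod F g) g + T) :=
    hfree.isAtomSeq_replicate_orderMod_add hTF hT (hfin g hg) hg hFH
  have hsub : (T.toFinset : Set G) ⊆ F := fun x hx => hTF x (mem_toFinset.1 hx)
  refine ⟨T.toFinset, hsub, Nat.dvd_antisymm ?_ (orderMod_dvd_of_subset hsub), ?_⟩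
  · rw [orderMod_dvd_iff, ← neg_mem_iff, ← hT]
    exact multiset_sum_mem_closure fun x hx => mem_toFinset.2 hx
  · have hcount : ∀ f ∈ T.toFinset, 2 ≤ count f T := by
      intro f hf
      have hfF : f ∈ F := hsub hf
      have hfg : g ≠ f := fun h => (hF hfF).2 h.symm
      simpa [count_replicate, hfg] using
        hatom.1.two_le_count (mem_add.2 (.inr (mem_toFinset.1 hf))) (hind f hfF)
    have hsupp : T.toFinset.card * 2 ≤ card T :=
      (T.toFinset.card_nsmul_le_sum _ 2 hcount).trans_eq T.toFinset_sum_count_eq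
    have hcard : orderMod F g + card T ≤ n := by
      simpa using hatom.card_le_of_isHalfFactorialSet hHF hn hH
    rw [Set.ncard_coe_finset]
    omega

end ZeroSumFree

/-! ### Ranks and generating sets -/

section Rank

variable {G : Type*} [AddCommGroup G] {p : ℕ}

theorem pRank_le_of_injective {K : Type*} [AddCommGroup K] [Finite G] (p : ℕ) (f : K →+ G)
    (hf : Function.Injective f) : pRank K p ≤ pRank G p :=
  Nat.log_mono_right <| Nat.card_le_card_of_injective
    (Subtype.map f fun x (hx : p • x = 0) => by rw [← _root_.map_nsmul, hx, _root_.map_zero])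
    (Subtype.map_injective _ hf)

theorem pRank_le_rankG [Finite G] (hp : p.Prime) : pRank G p ≤ rankG G := by
  refine le_csSup ⟨Nat.card G, ?_⟩ ⟨p, hp, rfl⟩
  rintro _ ⟨q, -, rfl⟩
  exact (Nat.log_le_self _ _).trans (Nat.card_le_card_of_injective _ Subtype.val_injective)

theorem ker_modN_mkQ (n : ℕ) :
    (ModN.mkQ n : G →+ ModN G n).ker = (nsmulAddMonoidHom n : G →+ G).range := by
  ext x
  change (LinearMap.range (LinearMap.lsmul ℤ G n)).mkQ x = 0 ↔ _
  simp [nsmulAddMonoidHom_apply]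

theorem modN_mkQ_surjective (n : ℕ) : Function.Surjective (ModN.mkQ n : G →+ ModN G n) :=
  Submodule.mkQ_surjective _

theorem natCard_modN [Finite G] (n : ℕ) : Nat.card (ModN G n) = Nat.card {x : G // n • x = 0} :=
  calc
    Nat.card (ModN G n) = (ModN.mkQ n : G →+ ModN G n).ker.index := by
      rw [AddSubgroup.index_ker, AddMonoidHom.range_eq_top.2 (modN_mkQ_surjective n),
        AddSubgroup.card_top]
    _ = (nsmulAddMonoidHom n : G →+ G).range.index := by rw [ker_modN_mkQ]
    _ = Nat.card (nsmulAddMonoidHom n : G →+ G).ker := AddSubgroup.index_range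

theorem finrank_modN_eq_pRank [Finite G] [Fact p.Prime] :
    Module.finrank (ZMod p) (ModN G p) = pRank G p := by
  have : Finite (ModN G p) := Quotient.finite _
  rw [pRank, ← natCard_modN, Module.natCard_eq_pow_finrank (K := ZMod p), Nat.card_zmod,
    Nat.log_pow (Fact.out : p.Prime).one_lt]

theorem exists_subset_ncard_le_pRank_closure_sup_eq_top [Finite G] (hp : p.Prime) {E : Set G}
    (hE : AddSubgroup.closure E = ⊤) :
    ∃ F ⊆ E, F.ncard ≤ pRank G p ∧
      AddSubgroup.closure F ⊔ (nsmulAddMonoidHom p : G →+ G).range = ⊤ := by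
  have : Fact p.Prime := ⟨hp⟩
  have : Finite (ModN G p) := Quotient.finite _
  obtain ⟨F, hFE, -, hspan, hind⟩ :=
    exists_linearIndepOn_extension (linearIndepOn_empty (ZMod p) (ModN.mkQ p)) E.empty_subset
  refine ⟨F, hFE, ?_, ?_⟩
  · have := Fintype.ofFinite F
    rw [← finrank_modN_eq_pRank, ← Nat.card_coe_set_eq, Nat.card_eq_fintype_card]
    exact hind.linearIndependent.fintype_card_le_finrank
  · have hspan_le : Submodule.span (ZMod p) (ModN.mkQ p '' F) ≤
        ((AddSubgroup.closure F).map (ModN.mkQ p)).toZModSubmodule p :=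
      Submodule.span_le.2 (Set.image_mono AddSubgroup.subset_closure)
    rw [← ker_modN_mkQ, ← AddSubgroup.comap_map_eq, eq_top_iff, ← hE, AddSubgroup.closure_le]
    exact fun e he => hspan_le (hspan ⟨e, he, rfl⟩)

theorem mem_of_nsmul_mem_of_sup_range_eq_top [Finite G] {K : AddSubgroup G}
    (hK : K ⊔ (nsmulAddMonoidHom p : G →+ G).range = ⊤) {x : G} (hx : p • x ∈ K) : x ∈ K := by
  have hsurj : Function.Surjective (nsmulAddMonoidHom p : G ⧸ K →+ G ⧸ K) := by
    intro y
    induction y using QuotientAddGroup.induction_on with | H y =>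
    obtain ⟨k, hk, _, ⟨z, rfl⟩, rfl⟩ := AddSubgroup.mem_sup.1 (hK ▸ AddSubgroup.mem_top y)
    refine ⟨(z : G ⧸ K), ?_⟩
    rw [QuotientAddGroup.mk_add, (QuotientAddGroup.eq_zero_iff k).2 hk, zero_add]
    rfl
  have hinj := Finite.injective_iff_surjective.2 hsurj
  rw [← QuotientAddGroup.eq_zero_iff] at hx ⊢
  exact (injective_iff_map_eq_zero _).1 hinj x hx

theorem exists_subset_ncard_le_rankG_nsmul_mem [Finite G] (hp : p.Prime) (E : Set G) :
    ∃ F ⊆ E, F.ncard ≤ rankG G ∧ ∀ x ∈ AddSubgroup.closure E,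
      p • x ∈ AddSubgroup.closure F → x ∈ AddSubgroup.closure F := by
  set K := AddSubgroup.closure E
  obtain ⟨F, hFE, hcard, hF⟩ := exists_subset_ncard_le_pRank_closure_sup_eq_top hp
    (AddSubgroup.closure_closure_coe_preimage (k := E))
  have hmap : AddSubgroup.closure (K.subtype '' F) = (AddSubgroup.closure F).map K.subtype :=
    (AddMonoidHom.map_closure _ _).symm
  refine ⟨K.subtype '' F, Set.image_subset_iff.2 hFE, ?_, fun x hx hpx => ?_⟩
  · rw [Set.ncard_image_of_injective F K.subtype_injective]
    exact hcard.trans ((pRank_le_of_injective p K.subtype K.subtype_injective).trans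
      (pRank_le_rankG hp))
  · lift x to K using hx
    rw [hmap] at hpx ⊢
    exact AddSubgroup.mem_map_of_mem _ (mem_of_nsmul_mem_of_sup_range_eq_top hF
      ((AddSubgroup.mem_map_iff_mem K.subtype_injective).1 hpx))

theorem exists_subset_ncard_le_rankG_not_dvd_orderMod [Finite G] (hp : p.Prime) {E : Set G} {g : G}
    (hg : g ∈ AddSubgroup.closure E) : ∃ F ⊆ E, F.ncard ≤ rankG G ∧ ¬p ∣ orderMod F g := by
  obtain ⟨F, hFE, hcard, hF⟩ := exists_subset_ncard_le_rankG_nsmul_mem hp E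
  refine ⟨F, hFE, hcard, fun ⟨k, hk⟩ => ?_⟩
  have hpos : 0 < orderMod F g := orderMod_pos F (isOfFinAddOrder_of_finite g)
  have hmem : p • k • g ∈ AddSubgroup.closure F := by
    rw [smul_smul, ← hk]
    exact orderMod_nsmul_mem F g
  have hdvd : orderMod F g ∣ k := orderMod_dvd_iff.2 (hF _ (nsmul_mem hg k) hmem)
  have hk0 : 0 < k := Nat.pos_of_ne_zero (by rintro rfl; omega)
  exact (Nat.le_of_dvd hk0 hdvd).not_gt (hk ▸ lt_mul_left hk0 hp.one_lt)

end Rank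

theorem two_mul_ncard_add_five_le_of_forall_ssubset {G : Type*} [AddCommGroup G] [Finite G]
    {E : Set G} {g : G} {n : ℕ} (hcard : rankG G < E.ncard) (hgE : g ∈ AddSubgroup.closure E)
    (hproper : ∀ F ⊂ E, g ∉ AddSubgroup.closure F)
    (hbound : ∀ F ⊂ E, ∃ F' ⊆ F, orderMod F' g = orderMod F g ∧ 2 * F'.ncard + orderMod F g ≤ n) :
    2 * E.ncard + 5 ≤ 2 * n := by
  have two_le : ∀ F ⊂ E, 2 ≤ orderMod F g := fun F hF =>
    (Nat.two_le_iff _).2 ⟨(orderMod_pos F (isOfFinAddOrder_of_finite g)).ne',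
      orderMod_eq_one_iff.not.2 (hproper F hF)⟩
  have hempty : ∅ ⊂ E :=
    Set.empty_ssubset.2 (Set.nonempty_of_ncard_ne_zero (Nat.ne_zero_of_lt hcard))
  obtain ⟨F₁, hF₁ : F₁ ⊂ E, hmin⟩ :=
    Set.exists_min_image {F | F ⊂ E} (orderMod · g) (Set.toFinite _) ⟨∅, hempty⟩
  obtain ⟨p, hp, hpF₁⟩ := Nat.exists_prime_and_dvd (orderMod_eq_one_iff.not.2 (hproper F₁ hF₁))
  obtain ⟨F₂, hF₂E, hF₂card, hpF₂⟩ := exists_subset_ncard_le_rankG_not_dvd_orderMod hp hgE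
  have hF₂ : F₂ ⊂ E := hF₂E.ssubset_of_ne (by rintro rfl; omega)
  obtain ⟨F₁', hF₁', hord₁, hle₁⟩ := hbound F₁ hF₁
  obtain ⟨F₂', hF₂', hord₂, hle₂⟩ := hbound F₂ hF₂
  have hunion : F₁' ∪ F₂' = E := by
    by_contra hne
    have hdvd₁ : orderMod (F₁' ∪ F₂') g ∣ orderMod F₁ g :=
      hord₁ ▸ orderMod_dvd_of_subset Set.subset_union_left
    have hdvd₂ : orderMod (F₁' ∪ F₂') g ∣ orderMod F₂ g :=
      hord₂ ▸ orderMod_dvd_of_subset Set.subset_union_right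
    have hle : orderMod F₁ g ≤ orderMod (F₁' ∪ F₂') g :=
      hmin _ ((Set.union_subset (hF₁'.trans hF₁.1) (hF₂'.trans hF₂E)).ssubset_of_ne hne)
    have hpos : 0 < orderMod F₁ g := orderMod_pos F₁ (isOfFinAddOrder_of_finite g)
    have heq := le_antisymm (Nat.le_of_dvd hpos hdvd₁) hle
    exact hpF₂ (hpF₁.trans (heq ▸ hdvd₂))
  have hne : orderMod F₁ g ≠ orderMod F₂ g := fun h => hpF₂ (h ▸ hpF₁)
  have hcard_le : E.ncard ≤ F₁'.ncard + F₂'.ncard := hunion ▸ Set.ncard_union_le F₁' F₂'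
  have := two_le F₁ hF₁
  have := two_le F₂ hF₂
  omega

/-- If `|G₀| ≥ r(G) + 2`, every `G₀ \ {h}` is half-factorial with
`h ∉ ⟨G₀ \ {h, h'}⟩` for all `h' ∈ G₀ \ {h}`, and some `g ∈ G₀` satisfies
`g ∈ ⟨G₀ \ {g}⟩` with `ord(g)` not a prime power, then `|G₀| ≤ exp(G) − 2`. -/
theorem stmt_8 {G : Type*} [AddCommGroup G] [Fintype G] (G₀ : Set G)
    (hcard : rankG G + 2 ≤ G₀.ncard)
    (ha : ∀ h ∈ G₀, IsHalfFactorialSet (G₀ \ {h}) ∧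
      ∀ h' ∈ G₀ \ {h}, h ∉ AddSubgroup.closure (G₀ \ {h, h'}))
    (hb : ∃ g ∈ G₀, g ∈ AddSubgroup.closure (G₀ \ {g}) ∧
      ¬ IsPrimePow (addOrderOf g)) :
    G₀.ncard + 2 ≤ AddMonoid.exponent G := by
  obtain ⟨g, hg, hgE, -⟩ := hb
  have hcardE : (G₀ \ {g}).ncard + 1 = G₀.ncard := Set.ncard_sdiff_singleton_add_one hg G₀.toFinite
  suffices 2 * (G₀ \ {g}).ncard + 5 ≤ 2 * AddMonoid.exponent G by omega
  have hexp : 0 < AddMonoid.exponent G := AddMonoid.exponent_pos.2 .of_finite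
  apply two_mul_ncard_add_five_le_of_forall_ssubset (by omega) hgE
  · intro F hF hgF
    obtain ⟨h, hh, hhF⟩ := Set.exists_of_ssubset hF
    have hFsub : F ⊆ G₀ \ {g, h} := fun x hx => by grind [hF.1 hx]
    exact (ha g hg).2 h hh (AddSubgroup.closure_mono hFsub hgF)
  · intro F hF
    obtain ⟨h, hh, hhF⟩ := Set.exists_of_ssubset hF
    have hFsub : F ⊆ (G₀ \ {h}) \ {g} := fun x hx => by grind [hF.1 hx]
    have hind : ∀ f ∈ F, f ∉ AddSubgroup.closure ((G₀ \ {h}) \ {f}) := by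
      intro f hf
      rw [sdiff_sdiff_comm, Set.sdiff_sdiff, Set.singleton_union]
      exact (ha f (hF.1 hf).1).2 h (by grind)
    exact exists_subset_two_mul_ncard_add_orderMod_le (ha h hh.1).1 hexp
      (fun x _ => AddMonoid.exponent_nsmul_eq_zero x) ⟨hg, by grind⟩ hFsub hind
end

section
/- Let G be a finite abelian group with exp(G) = n and let G₀ ⊆ G be a minimal non-half-factorial LCN-set. Suppose there exists a subset G₂ ⊆ G₀ with ⟨G₂⟩ = ⟨G₀⟩ and |G₂| ≤ |G₀| − 2. Then min Δ(G₀) ≤ max {1, n − 4}. -/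
open Multiset

/-!
Call a zero-sum sequence good if it is a product of atoms of cross number one. Every proper subset
of `G₀` is half-factorial, so by the theorem of Skula and Zaks all zero-sum sequences over it are
good; in particular an atom of cross number `≠ 1` contains every element of `G₀`. Since `G₂` misses
two elements of `G₀`, some `g ∉ G₂` may be added to it without reaching `G₀`, and this yields a good
sequence containing `g` once and otherwise only elements of `G₂`. Multiplying by copies of it, one
sees that every zero-sum sequence over `G₀` becomes good after multiplication by suitable elementary
atoms `q ^ ord(q)`. For an atom `U` of cross number `> 1`, comparing lengths then gives
`k(U) ≥ min Δ(G₀) + 1`. If all orders in `G₀` were less than `2 * min Δ(G₀) + 3`, this would allow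
the elementary atoms to be cancelled again, making `U` itself good, which is absurd.
-/

section Combinatorics

variable {α : Type*}

theorem exists_mem_notMem_insert_ssubset {s t : Set α} (hsub : s ⊆ t)
    (hcard : s.ncard + 2 ≤ t.ncard) :
    ∃ g ∈ t, g ∉ s ∧ insert g s ⊂ t := by
  have hfin : t.Finite := Set.finite_of_ncard_pos (by omega)
  obtain ⟨g, hg, hgs⟩ := Set.exists_mem_notMem_of_ncard_lt_ncard (show s.ncard < t.ncard by omega)
    (hfin.subset hsub)
  refine ⟨g, hg, hgs, (Set.insert_subset hg hsub).ssubset_of_ne fun h => ?_⟩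
  have := Set.ncard_insert_le g s
  rw [h] at this
  omega

theorem exists_le_count_sum_lt_add_count [DecidableEq α] {q : α} {o : ℕ}
    {l : Multiset (Multiset α)} (h : o ≤ l.sum.count q) :
    ∃ l' ≤ l, o ≤ l'.sum.count q ∧ ∀ W ∈ l', l'.sum.count q < o + W.count q := by
  obtain ⟨l', hle, hl', hminimal⟩ :=
    exists_minimal_le_of_wellFoundedLT (fun t : Multiset (Multiset α) => o ≤ t.sum.count q) l h
  refine ⟨l', hle, hl', fun W hW => ?_⟩
  obtain ⟨t, rfl⟩ := exists_cons_of_mem hW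
  by_contra! hge
  rw [sum_cons, count_add] at hge
  have := hminimal (show o ≤ t.sum.count q by omega) (le_cons_self t W)
  exact (lt_cons_self t W).not_ge this

theorem two_mul_card_le_of_forall_lt_count [DecidableEq α] {q : α} {o z : ℕ}
    {l : Multiset (Multiset α)} (hz : 0 < z) (hsum : l.sum.count q = o + z)
    (h : ∀ W ∈ l, z < W.count q) : 2 * card l ≤ o + 1 := by
  have hle : card l * (z + 1) ≤ o + z := by
    have hcount : l.sum.count q = (l.map (count q)).sum := by
      simpa using count_sum (m := l) (f := id) (a := q)
    rw [← hsum, hcount, ← card_map (count q) l, ← smul_eq_mul]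
    refine card_nsmul_le_sum fun x hx => ?_
    obtain ⟨W, hW, rfl⟩ := mem_map.1 hx
    exact h W hW
  nlinarith

end Combinatorics

section ZeroSum

variable {G : Type*} [AddCommGroup G] {G₀ G₁ : Set G} {A B S U : Multiset G} {g q : G}

/-- The monoid `B(G₀)` of zero-sum sequences over `G₀`, as a submonoid of the free abelian
monoid `Multiset G`. -/
def zeroSumMonoid (G₀ : Set G) : AddSubmonoid (Multiset G) where
  carrier := {S | IsZeroSumSeq G₀ S}
  zero_mem' := ⟨by simp, sum_zero⟩
  add_mem' hA hB :=
    ⟨fun x hx => (mem_add.1 hx).elim (hA.1 x) (hB.1 x), by rw [sum_add, hA.2, hB.2, add_zero]⟩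

/-- The submonoid of `B(G₀)` generated by the atoms of cross number one. -/
def unitCrossMonoid (G₀ : Set G) : AddSubmonoid (Multiset G) :=
  AddSubmonoid.closure {A | IsAtomSeq G₀ A ∧ crossNumber A = 1}

/-- The submonoid of `B(G₀)` generated by the elementary atoms `g ^ ord(g)` with `g ∈ G₀`
(an element of infinite order contributes the empty sequence). -/
def elementaryMonoid (G₀ : Set G) : AddSubmonoid (Multiset G) :=
  AddSubmonoid.closure ((fun g => replicate (addOrderOf g) g) '' G₀)

theorem crossNumber_add (A B : Multiset G) :
    crossNumber (A + B) = crossNumber A + crossNumber B := by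
  simp [crossNumber]

theorem crossNumber_nsmul (n : ℕ) (A : Multiset G) :
    crossNumber (n • A) = n * crossNumber A := by
  simp [crossNumber, map_nsmul, sum_nsmul]

theorem crossNumber_nonneg (A : Multiset G) : 0 ≤ crossNumber A :=
  sum_nonneg fun x hx => by
    obtain ⟨g, -, rfl⟩ := mem_map.1 hx
    positivity

theorem crossNumber_mono (h : A ≤ B) : crossNumber A ≤ crossNumber B := by
  obtain ⟨C, rfl⟩ := Multiset.le_iff_exists_add.1 h
  linarith [crossNumber_add A C, crossNumber_nonneg C]

theorem crossNumber_replicate_addOrderOf (hq : IsOfFinAddOrder q) :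
    crossNumber (replicate (addOrderOf q) q) = 1 := by
  have : (addOrderOf q : ℚ) ≠ 0 := by exact_mod_cast hq.addOrderOf_pos.ne'
  simp [crossNumber, this]

theorem crossNumber_sum_eq_card {l : Multiset (Multiset G)} (h : ∀ A ∈ l, crossNumber A = 1) :
    crossNumber l.sum = card l := by
  induction l using Multiset.induction_on with
  | empty => simp [crossNumber]
  | cons A l ih =>
    rw [forall_mem_cons] at h
    rw [sum_cons, crossNumber_add, h.1, ih h.2, card_cons]
    push_cast
    ring

theorem IsZeroSumSeq.of_add_right (h : IsZeroSumSeq G₀ (A + B)) (hA : A.sum = 0) :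
    IsZeroSumSeq G₀ B :=
  ⟨fun x hx => h.1 x (mem_add.2 (.inr hx)), by simpa [hA] using h.2⟩

theorem IsAtomSeq.of_forall_mem (h : IsAtomSeq G₁ A) (hA : ∀ x ∈ A, x ∈ G₀) : IsAtomSeq G₀ A := by
  refine ⟨⟨hA, h.1.2⟩, h.2.1, fun B C hB hC hB0 hC0 hBC => ?_⟩
  subst hBC
  exact h.2.2 B C ⟨fun x hx => h.1.1 x (mem_add.2 (.inl hx)), hB.2⟩
    ⟨fun x hx => h.1.1 x (mem_add.2 (.inr hx)), hC.2⟩ hB0 hC0 rfl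

theorem isAtomSeq_replicate_addOrderOf_s9 (hq : q ∈ G₀) (hord : IsOfFinAddOrder q) :
    IsAtomSeq G₀ (replicate (addOrderOf q) q) := by
  refine ⟨⟨fun x hx => eq_of_mem_replicate hx ▸ hq, by simp [addOrderOf_nsmul_eq_zero]⟩,
    fun h => hord.addOrderOf_pos.ne' (by simpa using congrArg card h),
    fun A B hA _ hA0 hB0 hAB => ?_⟩
  obtain ⟨a, -, rfl⟩ := le_replicate_iff.1 (hAB ▸ Multiset.le_add_right A B)
  have ha : 0 < a := by simpa using card_pos.2 hA0
  have hdvd : addOrderOf q ∣ a := addOrderOf_dvd_of_nsmul_eq_zero (by simpa using hA.2)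
  have hcard : addOrderOf q = a + card B := by simpa using congrArg card hAB
  have := Nat.le_of_dvd ha hdvd
  have := card_pos.2 hB0
  omega

theorem IsZeroSumSeq.mem_closure_isAtomSeq (hS : IsZeroSumSeq G₀ S) :
    S ∈ AddSubmonoid.closure {A | IsAtomSeq G₀ A} := by
  induction S using Multiset.strongInductionOn with
  | _ S ih =>
    by_cases hS0 : S = 0
    · exact hS0 ▸ zero_mem _
    by_cases hatom : IsAtomSeq G₀ S
    · exact AddSubmonoid.subset_closure hatom
    obtain ⟨A, B, hA, hB, hA0, hB0, rfl⟩ : ∃ A B : Multiset G, IsZeroSumSeq G₀ A ∧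
        IsZeroSumSeq G₀ B ∧ A ≠ 0 ∧ B ≠ 0 ∧ S = A + B := by
      by_contra! h
      exact hatom ⟨hS, hS0, h⟩
    exact add_mem (ih A (lt_add_of_pos_right A (pos_iff_ne_zero.2 hB0)) hA)
      (ih B (lt_add_of_pos_left B (pos_iff_ne_zero.2 hA0)) hB)

theorem replicate_addOrderOf_mem_elementaryMonoid (hq : q ∈ G₀) :
    replicate (addOrderOf q) q ∈ elementaryMonoid G₀ :=
  AddSubmonoid.subset_closure (Set.mem_image_of_mem _ hq)

theorem unitCrossMonoid_le_zeroSumMonoid : unitCrossMonoid G₀ ≤ zeroSumMonoid G₀ :=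
  AddSubmonoid.closure_le.2 fun _ hA => hA.1.1

theorem elementaryMonoid_le_unitCrossMonoid (hord : ∀ g ∈ G₀, IsOfFinAddOrder g) :
    elementaryMonoid G₀ ≤ unitCrossMonoid G₀ := by
  refine AddSubmonoid.closure_mono ?_
  rintro _ ⟨g, hg, rfl⟩
  exact ⟨isAtomSeq_replicate_addOrderOf_s9 hg (hord g hg),
    crossNumber_replicate_addOrderOf (hord g hg)⟩

theorem exists_pos_nsmul_mem_elementaryMonoid (hord : ∀ g ∈ G₀, IsOfFinAddOrder g)
    (hS : ∀ x ∈ S, x ∈ G₀) : ∃ n, 0 < n ∧ n • S ∈ elementaryMonoid G₀ := by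
  induction S using Multiset.induction_on with
  | empty => exact ⟨1, one_pos, by simp [zero_mem]⟩
  | cons a S ih =>
    rw [forall_mem_cons] at hS
    obtain ⟨n, hn, hmem⟩ := ih hS.2
    refine ⟨n * addOrderOf a, mul_pos hn (hord a hS.1).addOrderOf_pos, ?_⟩
    have hsplit : (n * addOrderOf a) • (a ::ₘ S) =
        n • replicate (addOrderOf a) a + addOrderOf a • n • S := by
      rw [← singleton_add, nsmul_add, nsmul_singleton, nsmul_replicate, mul_nsmul]
    rw [hsplit]
    exact add_mem (nsmul_mem (replicate_addOrderOf_mem_elementaryMonoid hS.1) n) (nsmul_mem hmem _)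

theorem IsAtomSeq.crossNumber_eq_one_of_mem (hU : IsAtomSeq G₀ U) (h : U ∈ unitCrossMonoid G₀) :
    crossNumber U = 1 := by
  induction h using AddSubmonoid.closure_induction with
  | mem A hA => exact hA.2
  | zero => exact absurd rfl hU.2.1
  | add A B hA hB ihA ihB =>
    rcases eq_or_ne A 0 with rfl | hA0
    · simpa using ihB (by simpa using hU)
    rcases eq_or_ne B 0 with rfl | hB0
    · simpa using ihA (by simpa using hU)
    exact absurd rfl (hU.2.2 A B (unitCrossMonoid_le_zeroSumMonoid hA)
      (unitCrossMonoid_le_zeroSumMonoid hB) hA0 hB0)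

theorem IsZeroSumSeq.exists_isAtomSeq_le_of_notMem (hS : IsZeroSumSeq G₀ S)
    (h : S ∉ unitCrossMonoid G₀) : ∃ A ≤ S, IsAtomSeq G₀ A ∧ crossNumber A ≠ 1 := by
  obtain ⟨l, hl, rfl⟩ := AddSubmonoid.exists_multiset_of_mem_closure hS.mem_closure_isAtomSeq
  by_contra! hone
  exact h (multiset_sum_mem l fun A hA =>
    AddSubmonoid.subset_closure ⟨hl A hA, hone A (le_sum_of_mem hA) (hl A hA)⟩)

theorem exists_mem_lengthSet_eq_crossNumber (h : S ∈ unitCrossMonoid G₀) :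
    ∃ k ∈ LengthSet G₀ S, (k : ℚ) = crossNumber S := by
  obtain ⟨l, hl, rfl⟩ := AddSubmonoid.exists_multiset_of_mem_closure h
  exact ⟨card l, ⟨l, rfl, fun A hA => (hl A hA).1, rfl⟩,
    (crossNumber_sum_eq_card fun A hA => (hl A hA).2).symm⟩

theorem IsAtomSeq.add_one_mem_lengthSet (hA : IsAtomSeq G₀ A) {k : ℕ}
    (hk : k ∈ LengthSet G₀ B) : k + 1 ∈ LengthSet G₀ (A + B) := by
  obtain ⟨l, rfl, hl, rfl⟩ := hk
  exact ⟨A ::ₘ l, card_cons A l, forall_mem_cons.2 ⟨hA, hl⟩, sum_cons A l⟩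

theorem IsAtomSeq.mem_lengthSet_nsmul_s9 (hA : IsAtomSeq G₀ A) (n : ℕ) :
    n ∈ LengthSet G₀ (n • A) :=
  ⟨replicate n A, card_replicate n A, fun _ hB => eq_of_mem_replicate hB ▸ hA, sum_replicate n A⟩

theorem exists_mem_deltaOf_le {L : Set ℕ} {x y : ℕ} (hx : x ∈ L) (hy : y ∈ L) (hxy : x < y) :
    ∃ d ∈ DeltaOf L, d ≤ y - x := by
  classical
  have hex : ∃ z, z ∈ L ∧ x < z := ⟨y, hy, hxy⟩
  obtain ⟨hmem, hlt⟩ := Nat.find_spec hex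
  exact ⟨Nat.find hex - x, ⟨x, hx, _, hmem, hlt, rfl, fun z hz h => Nat.find_min hex h.2 ⟨hz, h.1⟩⟩,
    Nat.sub_le_sub_right (Nat.find_min' hex ⟨hy, hxy⟩) x⟩

theorem exists_mem_deltaSet_le {x y : ℕ} (hx : x ∈ LengthSet G₀ B) (hy : y ∈ LengthSet G₀ B)
    (hxy : x < y) : ∃ d ∈ DeltaSet G₀, d ≤ y - x := by
  obtain ⟨d, hd, hle⟩ := exists_mem_deltaOf_le hx hy hxy
  obtain ⟨l, rfl, hl, rfl⟩ := hy
  obtain ⟨A, hA⟩ := card_pos_iff_exists_mem.1 (pos_of_gt hxy)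
  have hsum : l.sum ∈ zeroSumMonoid G₀ := multiset_sum_mem l fun A hA => (hl A hA).1
  exact ⟨d, ⟨l.sum, hsum,
    fun h0 => (hl A hA).2.1 (le_zero.1 (h0 ▸ le_sum_of_mem hA)), hd⟩, hle⟩

theorem IsHalfFactorialSet.lengthSet_subsingleton (h : IsHalfFactorialSet G₀) (B : Multiset G) :
    (LengthSet G₀ B).Subsingleton := by
  intro x hx y hy
  by_contra hne
  rcases lt_or_gt_of_ne hne with hlt | hlt
  · obtain ⟨d, hd, -⟩ := exists_mem_deltaSet_le hx hy hlt
    exact h.subset hd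
  · obtain ⟨d, hd, -⟩ := exists_mem_deltaSet_le hy hx hlt
    exact h.subset hd

theorem IsHalfFactorialSet.crossNumber_eq_one (h : IsHalfFactorialSet G₀)
    (hord : ∀ g ∈ G₀, IsOfFinAddOrder g) (hU : IsAtomSeq G₀ U) : crossNumber U = 1 := by
  obtain ⟨n, hn, hmem⟩ := exists_pos_nsmul_mem_elementaryMonoid hord hU.1.1
  obtain ⟨k, hk, hcross⟩ := exists_mem_lengthSet_eq_crossNumber
    (elementaryMonoid_le_unitCrossMonoid hord hmem)
  rw [h.lengthSet_subsingleton _ hk (hU.mem_lengthSet_nsmul_s9 n), crossNumber_nsmul] at hcross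
  have hn0 : (n : ℚ) ≠ 0 := by exact_mod_cast hn.ne'
  exact mul_left_cancel₀ hn0 (by rw [← hcross, mul_one])

theorem isHalfFactorialSet_of_crossNumber_eq_one
    (h : ∀ U, IsAtomSeq G₀ U → crossNumber U = 1) : IsHalfFactorialSet G₀ := by
  refine Set.eq_empty_of_forall_notMem ?_
  rintro _ ⟨B, -, -, _, ⟨l, rfl, hl, hlB⟩, _, ⟨l', rfl, hl', hlB'⟩, hlt, -⟩
  have hcard := crossNumber_sum_eq_card fun A hA => h A (hl A hA)
  rw [hlB, ← hlB', crossNumber_sum_eq_card fun A hA => h A (hl' A hA)] at hcard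
  exact hlt.ne' (by exact_mod_cast hcard)

theorem IsHalfFactorialSet.mem_unitCrossMonoid (h : IsHalfFactorialSet G₁)
    (hord : ∀ g ∈ G₁, IsOfFinAddOrder g) (hsub : G₁ ⊆ G₀) (hS : IsZeroSumSeq G₁ S) :
    S ∈ unitCrossMonoid G₀ :=
  have hatoms : {A | IsAtomSeq G₁ A} ⊆ {A | IsAtomSeq G₀ A ∧ crossNumber A = 1} :=
    fun _ hA => ⟨hA.of_forall_mem fun x hx => hsub (hA.1.1 x hx), h.crossNumber_eq_one hord hA⟩
  AddSubmonoid.closure_mono hatoms hS.mem_closure_isAtomSeq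

theorem IsMinNonHalfFactorial.mem_of_crossNumber_ne_one (hmin : IsMinNonHalfFactorial G₀)
    (hord : ∀ g ∈ G₀, IsOfFinAddOrder g) (hA : IsAtomSeq G₀ A) (hA1 : crossNumber A ≠ 1)
    (hq : q ∈ G₀) : q ∈ A := by
  by_contra hqA
  have hhf : IsHalfFactorialSet (G₀ \ {q}) := hmin.2 _ (Set.sdiff_singleton_ssubset.2 hq)
  exact hA1 (hhf.crossNumber_eq_one (fun g hg => hord g hg.1)
    (hA.of_forall_mem fun x hx => ⟨hA.1.1 x hx, fun hxq => hqA (hxq ▸ hx)⟩))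

-- The two factorizations of `A + E` have lengths `1 + k(E)` and `k(A) + k(E)`.
theorem IsAtomSeq.sInf_deltaSet_add_one_le_crossNumber (hA : IsAtomSeq G₀ A)
    (hA1 : 1 < crossNumber A) {E : Multiset G} (hE : E ∈ unitCrossMonoid G₀)
    (hAE : A + E ∈ unitCrossMonoid G₀) : (sInf (DeltaSet G₀) + 1 : ℚ) ≤ crossNumber A := by
  obtain ⟨e, he, heE⟩ := exists_mem_lengthSet_eq_crossNumber hE
  obtain ⟨k, hk, hkAE⟩ := exists_mem_lengthSet_eq_crossNumber hAE
  rw [crossNumber_add, ← heE] at hkAE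
  have hlt : e + 1 < k := by
    have : (e + 1 : ℚ) < k := by linarith
    exact_mod_cast this
  obtain ⟨d, hd, hle⟩ := exists_mem_deltaSet_le (hA.add_one_mem_lengthSet he) hk hlt
  have hsInf : sInf (DeltaSet G₀) ≤ d := Nat.sInf_le hd
  have : (sInf (DeltaSet G₀) + (e + 1) : ℚ) ≤ k := by exact_mod_cast (by omega)
  linarith

theorem exists_cons_sum_eq_zero (hord : ∀ x ∈ G₁, IsOfFinAddOrder x)
    (hg : g ∈ AddSubgroup.closure G₁) :
    ∃ S : Multiset G, (∀ x ∈ S, x ∈ G₁) ∧ (g ::ₘ S).sum = 0 := by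
  have hneg : -g ∈ (AddSubgroup.closure G₁).toAddSubmonoid :=
    (AddSubgroup.closure G₁).neg_mem hg
  rw [AddSubgroup.closure_toAddSubmonoid_of_isOfFinAddOrder hord] at hneg
  obtain ⟨S, hS, hsum⟩ := AddSubmonoid.exists_multiset_of_mem_closure hneg
  exact ⟨S, hS, by rw [sum_cons, hsum, add_neg_cancel]⟩

-- Multiplying `U` by `(ord(g) - 1) * v_g(U)` copies of `g ::ₘ S` makes the multiplicity of `g`
-- divisible by `ord(g)`, so that `g` can be split off in elementary atoms.
theorem exists_add_nsmul_cons_mem_unitCrossMonoid (hg : g ∈ G₀) (hord : ∀ x ∈ G₀, IsOfFinAddOrder x)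
    (hhf : IsHalfFactorialSet (G₀ \ {g})) (hS : ∀ x ∈ S, x ∈ G₀ \ {g}) (hsum : (g ::ₘ S).sum = 0)
    (hU : IsZeroSumSeq G₀ U) : ∃ m : ℕ, U + m • (g ::ₘ S) ∈ unitCrossMonoid G₀ := by
  classical
  obtain ⟨o, ho⟩ := Nat.exists_eq_add_one.2 (hord g hg).addOrderOf_pos
  set v := U.count g
  set R := U.filter (· ≠ g) + (o * v) • S
  have hsplit : U + (o * v) • (g ::ₘ S) = v • replicate (addOrderOf g) g + R := by
    have hU' : U = replicate v g + U.filter (· ≠ g) := by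
      rw [← filter_eq', filter_add_not]
    have hrep : v • replicate (addOrderOf g) g = replicate v g + (o * v) • {g} := by
      rw [nsmul_replicate, nsmul_singleton, ← replicate_add, ho]
      congr 1
      ring
    rw [← singleton_add, nsmul_add, hrep]
    nth_rw 1 [hU']
    simp only [R]
    abel
  have hR : IsZeroSumSeq (G₀ \ {g}) R := by
    refine ⟨fun x hx => ?_, ?_⟩
    · rcases mem_add.1 hx with hx | hx
      · exact ⟨hU.1 x (mem_of_mem_filter hx), (mem_filter.1 hx).2⟩
      · exact hS x (mem_of_mem_nsmul hx)
    · have := congrArg Multiset.sum hsplit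
      simpa [-sum_cons, sum_nsmul, hsum, hU.2, addOrderOf_nsmul_eq_zero] using this.symm
  have helem : replicate (addOrderOf g) g ∈ unitCrossMonoid G₀ :=
    elementaryMonoid_le_unitCrossMonoid hord (replicate_addOrderOf_mem_elementaryMonoid hg)
  refine ⟨o * v, hsplit ▸ add_mem (nsmul_mem helem v) ?_⟩
  exact hhf.mem_unitCrossMonoid (fun x hx => hord x hx.1) Set.sdiff_subset hR

theorem IsMinNonHalfFactorial.exists_add_mem_unitCrossMonoid (hmin : IsMinNonHalfFactorial G₀)
    (hord : ∀ x ∈ G₀, IsOfFinAddOrder x) (hg : g ∉ G₁) (hss : insert g G₁ ⊂ G₀)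
    (hgen : g ∈ AddSubgroup.closure G₁) (hU : IsZeroSumSeq G₀ U) :
    ∃ E ∈ elementaryMonoid G₀, U + E ∈ unitCrossMonoid G₀ := by
  obtain ⟨hg₀, hsub⟩ := Set.insert_subset_iff.1 hss.subset
  obtain ⟨S, hS, hsum⟩ := exists_cons_sum_eq_zero (fun x hx => hord x (hsub hx)) hgen
  have hV : IsZeroSumSeq (insert g G₁) (g ::ₘ S) :=
    ⟨forall_mem_cons.2 ⟨.inl rfl, fun x hx => .inr (hS x hx)⟩, hsum⟩
  have hV₁ : g ::ₘ S ∈ unitCrossMonoid G₀ := IsHalfFactorialSet.mem_unitCrossMonoid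
    (hmin.2 _ hss) (fun x hx => hord x (hss.subset hx)) hss.subset hV
  obtain ⟨m, hm⟩ := exists_add_nsmul_cons_mem_unitCrossMonoid hg₀ hord
    (hmin.2 _ (Set.sdiff_singleton_ssubset.2 hg₀))
    (fun x hx => ⟨hsub (hS x hx), fun hxg => hg (hxg ▸ hS x hx)⟩) hsum hU
  obtain ⟨n, hn, hE⟩ := exists_pos_nsmul_mem_elementaryMonoid hord
    fun x hx => hss.subset (hV.1 x hx)
  obtain ⟨n, rfl⟩ := Nat.exists_eq_add_one.2 hn
  refine ⟨m • (n + 1) • (g ::ₘ S), nsmul_mem hE m, ?_⟩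
  have hsplit : U + m • (n + 1) • (g ::ₘ S) = U + m • (g ::ₘ S) + (m * n) • (g ::ₘ S) := by
    rw [add_assoc, ← add_nsmul, ← mul_nsmul', mul_add_one, add_comm m]
  exact hsplit ▸ add_mem hm (nsmul_mem hV₁ _)

theorem two_mul_add_three_le_addOrderOf [DecidableEq G] {l : Multiset (Multiset G)}
    {Z : Multiset G} {d : ℕ} (hord : IsOfFinAddOrder q) (hl : ∀ W ∈ l, crossNumber W = 1)
    (hsum : l.sum = replicate (addOrderOf q) q + Z) (hcount : ∀ W ∈ l, Z.count q < W.count q)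
    (hqZ : q ∈ Z) (hZ : (d + 1 : ℚ) ≤ crossNumber Z) : 2 * d + 3 ≤ addOrderOf q := by
  have hcard : d + 2 ≤ card l := by
    have hcross := crossNumber_sum_eq_card hl
    rw [hsum, crossNumber_add, crossNumber_replicate_addOrderOf hord] at hcross
    have : (d + 2 : ℚ) ≤ card l := by linarith
    exact_mod_cast this
  have hcount_sum : l.sum.count q = addOrderOf q + Z.count q := by simp [hsum]
  have := two_mul_card_le_of_forall_lt_count (count_pos.2 hqZ) hcount_sum hcount
  omega

/-
Choose a minimal subproduct `l'` of the factorization that still contains `q ^ ord(q)`, and let `Z`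
be the complement. If `Z` had an atom of cross number `≠ 1`, then `l'` would have `k(Z) + 1 ≥ d + 2`
factors, and by minimality each of them would contain `q` more often than `Z` does.
-/
theorem mem_unitCrossMonoid_of_add_replicate {d : ℕ} (hord : IsOfFinAddOrder q)
    (hlarge : ∀ A, IsAtomSeq G₀ A → crossNumber A ≠ 1 → (d + 1 : ℚ) ≤ crossNumber A)
    (hmem : ∀ A, IsAtomSeq G₀ A → crossNumber A ≠ 1 → q ∈ A)
    (hsmall : addOrderOf q < 2 * d + 3)
    (h : B + replicate (addOrderOf q) q ∈ unitCrossMonoid G₀) : B ∈ unitCrossMonoid G₀ := by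
  classical
  obtain ⟨l, hl, hsum⟩ := AddSubmonoid.exists_multiset_of_mem_closure h
  obtain ⟨l', hle, hcount, hlt⟩ :=
    exists_le_count_sum_lt_add_count (q := q) (o := addOrderOf q) (l := l) (by simp [hsum])
  obtain ⟨m, rfl⟩ := Multiset.le_iff_exists_add.1 hle
  obtain ⟨Z, hZ⟩ := Multiset.le_iff_exists_add.1 (le_count_iff_replicate_le.1 hcount)
  have hB : B = Z + m.sum := by
    rw [sum_add, hZ, add_comm B, add_assoc] at hsum
    exact (add_left_cancel hsum).symm
  have hm_mem : m.sum ∈ unitCrossMonoid G₀ :=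
    multiset_sum_mem m fun A hA => AddSubmonoid.subset_closure (hl A (mem_add.2 (.inr hA)))
  have hl'_mem : l'.sum ∈ unitCrossMonoid G₀ :=
    multiset_sum_mem l' fun A hA => AddSubmonoid.subset_closure (hl A (mem_add.2 (.inl hA)))
  have hZ₀ : IsZeroSumSeq G₀ Z := IsZeroSumSeq.of_add_right
    (hZ ▸ unitCrossMonoid_le_zeroSumMonoid hl'_mem) (by simp [addOrderOf_nsmul_eq_zero])
  suffices Z ∈ unitCrossMonoid G₀ from hB ▸ add_mem this hm_mem
  by_contra hZ_mem
  obtain ⟨A, hAZ, hA, hA1⟩ := hZ₀.exists_isAtomSeq_le_of_notMem hZ_mem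
  refine hsmall.not_ge (two_mul_add_three_le_addOrderOf hord
    (fun W hW => (hl W (mem_add.2 (.inl hW))).2) hZ (fun W hW => ?_)
    (mem_of_le hAZ (hmem A hA hA1)) ((hlarge A hA hA1).trans (crossNumber_mono hAZ)))
  have := hlt W hW
  rw [hZ, count_add, count_replicate_self] at this
  omega

theorem mem_unitCrossMonoid_of_add_elementary {d : ℕ} (hord : ∀ q ∈ G₀, IsOfFinAddOrder q)
    (hlarge : ∀ A, IsAtomSeq G₀ A → crossNumber A ≠ 1 → (d + 1 : ℚ) ≤ crossNumber A)
    (hmem : ∀ A, IsAtomSeq G₀ A → crossNumber A ≠ 1 → ∀ q ∈ G₀, q ∈ A)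
    (hsmall : ∀ q ∈ G₀, addOrderOf q < 2 * d + 3) {E : Multiset G} (hE : E ∈ elementaryMonoid G₀)
    (h : B + E ∈ unitCrossMonoid G₀) : B ∈ unitCrossMonoid G₀ := by
  induction hE using AddSubmonoid.closure_induction generalizing B with
  | mem E hE =>
    obtain ⟨q, hq, rfl⟩ := hE
    exact mem_unitCrossMonoid_of_add_replicate (hord q hq) hlarge
      (fun A hA hA1 => hmem A hA hA1 q hq) (hsmall q hq) h
  | zero => simpa using h
  | add E F _ _ ihE ihF => exact ihE (ihF (by rwa [add_assoc]))

theorem stmt_9_general {G₂ : Set G} (hord : ∀ g ∈ G₀, IsOfFinAddOrder g)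
    (hmin : IsMinNonHalfFactorial G₀) (hLCN : IsLCNSet G₀) (hsub : G₂ ⊆ G₀)
    (hgen : AddSubgroup.closure G₂ = AddSubgroup.closure G₀)
    (hcard : G₂.ncard + 2 ≤ G₀.ncard) :
    ∃ g ∈ G₀, 2 * sInf (DeltaSet G₀) + 3 ≤ addOrderOf g := by
  by_contra! hsmall
  obtain ⟨g, hg₀, hg₂, hss⟩ := exists_mem_notMem_insert_ssubset hsub hcard
  have hgG₂ : g ∈ AddSubgroup.closure G₂ := hgen ▸ AddSubgroup.subset_closure hg₀
  have hreach {U : Multiset G} (hU : IsAtomSeq G₀ U) :=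
    hmin.exists_add_mem_unitCrossMonoid hord hg₂ hss hgG₂ hU.1
  have hlarge (A : Multiset G) (hA : IsAtomSeq G₀ A) (hA1 : crossNumber A ≠ 1) :
      (sInf (DeltaSet G₀) + 1 : ℚ) ≤ crossNumber A := by
    obtain ⟨E, hE, hAE⟩ := hreach hA
    exact hA.sInf_deltaSet_add_one_le_crossNumber (lt_of_le_of_ne (hLCN A hA) hA1.symm)
      (elementaryMonoid_le_unitCrossMonoid hord hE) hAE
  refine hmin.1.ne_empty (isHalfFactorialSet_of_crossNumber_eq_one fun U hU => ?_)
  obtain ⟨E, hE, hUE⟩ := hreach hU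
  exact hU.crossNumber_eq_one_of_mem (mem_unitCrossMonoid_of_add_elementary hord hlarge
    (fun A hA hA1 q hq => hmin.mem_of_crossNumber_ne_one hord hA hA1 hq) hsmall hE hUE)

end ZeroSum

/-- If `G₀` is a minimal non-half-factorial LCN-set and some `G₂ ⊆ G₀`
satisfies `⟨G₂⟩ = ⟨G₀⟩` and `|G₂| ≤ |G₀| − 2`, then
`min Δ(G₀) ≤ max {1, exp(G) − 4}`. -/
theorem stmt_9 {G : Type*} [AddCommGroup G] [Fintype G] (G₀ G₂ : Set G)
    (hmin : IsMinNonHalfFactorial G₀) (hLCN : IsLCNSet G₀)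
    (hsub : G₂ ⊆ G₀)
    (hgen : AddSubgroup.closure G₂ = AddSubgroup.closure G₀)
    (hcard : G₂.ncard + 2 ≤ G₀.ncard) :
    sInf (DeltaSet G₀) ≤ max 1 (AddMonoid.exponent G - 4) := by
  obtain ⟨g, -, hg⟩ :=
    stmt_9_general (fun g _ => isOfFinAddOrder_of_finite g) hmin hLCN hsub hgen hcard
  have := AddMonoid.addOrderOf_le_exponent AddMonoid.ExponentExists.of_finite g
  omega
end
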